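/- Let $0 < \delta < 1$, let $F_{\min} \le F_{\max}$ be real numbers, and let $(L_i)_{i \ge 0}$ and $(U_i)_{i \ge 0}$ be sequences of real numbers satisfying, for all $i \ge 0$: $L_i \le F_{\min}$, $F_{\max} \le U_i$, $U_{i+1} - L_i \le (1 + \delta)(F_{\max} - L_i)$, and $U_i - L_{i+1} \le (1 + \delta)(U_i - F_{\min})$. Then for every $n \ge 0$, $U_n - L_n \le \delta^n (U_0 - L_0) + (1 + \delta) \frac{1 - \delta^n}{1 - \delta} (F_{\max} - F_{\min})$; in particular, $\limsup_{n \to \infty} (U_n - L_n) \le \frac{1 + \delta}{1 - \delta} (F_{\max} - F_{\min})$. -/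

import Mathlib

/-- convergence of the range-approximation scheme. If `0 < δ < 1`
and the sequences of bounds satisfy `Lᵢ ≤ F_min ≤ F_max ≤ Uᵢ`,
`U_{i+1} - Lᵢ ≤ (1+δ)(F_max - Lᵢ)` and `Uᵢ - L_{i+1} ≤ (1+δ)(Uᵢ - F_min)`, then
`U_n - L_n ≤ δⁿ(U₀ - L₀) + (1+δ)·(1-δⁿ)/(1-δ)·(F_max - F_min)` for all `n`, and
`limsup (U_n - L_n) ≤ (1+δ)/(1-δ)·(F_max - F_min)`. -/
theorem stmt_17 (δ : ℝ) (hδ0 : 0 < δ) (hδ1 : δ < 1)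
    (Fmin Fmax : ℝ) (hF : Fmin ≤ Fmax)
    (L U : ℕ → ℝ)
    (hL : ∀ i, L i ≤ Fmin) (hU : ∀ i, Fmax ≤ U i)
    (hUL : ∀ i, U (i + 1) - L i ≤ (1 + δ) * (Fmax - L i))
    (hLU : ∀ i, U i - L (i + 1) ≤ (1 + δ) * (U i - Fmin)) :
    (∀ n, U n - L n ≤
        δ ^ n * (U 0 - L 0) + (1 + δ) * ((1 - δ ^ n) / (1 - δ)) * (Fmax - Fmin)) ∧
    Filter.limsup (fun n => U n - L n) Filter.atTop
      ≤ (1 + δ) / (1 - δ) * (Fmax - Fmin) := by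
  have h1 : (1 - δ) ≠ 0 := by linarith
  have key : ∀ n, U n - L n ≤
      δ ^ n * (U 0 - L 0) + (1 + δ) * ((1 - δ ^ n) / (1 - δ)) * (Fmax - Fmin) := by
    intro n
    induction n with
    | zero => simp
    | succ n ih =>
      have h2 : U (n + 1) - L (n + 1) ≤ δ * (U n - L n) + (1 + δ) * (Fmax - Fmin) := by
        linarith [hUL n, hLU n]
      have h3 := mul_le_mul_of_nonneg_left ih hδ0.le
      have h4 : δ ^ (n + 1) * (U 0 - L 0)
          + (1 + δ) * ((1 - δ ^ (n + 1)) / (1 - δ)) * (Fmax - Fmin)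
          = δ * (δ ^ n * (U 0 - L 0) + (1 + δ) * ((1 - δ ^ n) / (1 - δ)) * (Fmax - Fmin))
            + (1 + δ) * (Fmax - Fmin) := by
        field_simp
        ring
      linarith
  refine ⟨key, ?_⟩
  have hp : Filter.Tendsto (fun n : ℕ => δ ^ n) Filter.atTop (nhds 0) :=
    tendsto_pow_atTop_nhds_zero_of_lt_one hδ0.le hδ1
  have ht : Filter.Tendsto (fun n : ℕ => δ ^ n * (U 0 - L 0)
      + (1 + δ) * ((1 - δ ^ n) / (1 - δ)) * (Fmax - Fmin)) Filter.atTop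
      (nhds ((1 + δ) / (1 - δ) * (Fmax - Fmin))) := by
    have h := (hp.mul_const (U 0 - L 0)).add
      ((((hp.const_sub 1).div_const (1 - δ)).const_mul (1 + δ)).mul_const (Fmax - Fmin))
    have e : (0 * (U 0 - L 0) + (1 + δ) * ((1 - 0) / (1 - δ)) * (Fmax - Fmin))
        = (1 + δ) / (1 - δ) * (Fmax - Fmin) := by
      ring
    rwa [e] at h
  rw [← ht.limsup_eq]
  refine Filter.limsup_le_limsup (Filter.Eventually.of_forall key) ?_ ht.isBoundedUnder_le
  refine Filter.IsBoundedUnder.isCoboundedUnder_le ?_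
  exact Filter.isBoundedUnder_of ⟨0, fun n => by
    show (0 : ℝ) ≤ U n - L n
    linarith [hL n, hU n]⟩
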